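/- Let n ≥ 9 be a natural number, let G be either Alt_n or Sym_n, let 0 < ε < 1, and set T := ⌈13 · log(n) · log(ε^{−1})⌉, where log is the natural logarithm. If x_1, …, x_T are independent, uniformly distributed random elements of G, then with probability at least 1 − ε there is some i such that x_i has even order and the power x_i^(|x_i|/2) moves at most ⌊4√n/3⌋ points. -/

import Mathlib

open scoped Classical

open MulAction in
lemma sum_transporters {G X : Type*} [Group G] [Fintype G] [Fintype X] [Nonempty X] [MulAction G X]
    (htr : ∀ a b : X, ∃ g : G, g • a = b) (r : X → X) :
    ∑ g : G, (Finset.univ.filter (fun a : X => g • a = r a)).card = Fintype.card G := by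
  have h1 : ∑ g : G, (Finset.univ.filter (fun a : X => g • a = r a)).card
      = ∑ g : G, (Finset.univ.filter (fun a : X => g • a = a)).card := by
    simp only [Finset.card_filter]
    rw [Finset.sum_comm, Finset.sum_comm (s := (Finset.univ : Finset G))]
    refine Finset.sum_congr rfl fun a _ => ?_
    simp only [← Finset.card_filter]
    obtain ⟨h, hh⟩ := htr a (r a)
    refine (Finset.card_bij (fun g _ => h * g) ?_ ?_ ?_).symm
    · intro g hg
      simp only [Finset.mem_filter, Finset.mem_univ, true_and] at hg ⊢
      rw [mul_smul, hg, hh]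
    · intro g _ g' _ he
      exact mul_left_cancel he
    · intro g hg
      simp only [Finset.mem_filter, Finset.mem_univ, true_and] at hg
      refine ⟨h⁻¹ * g, ?_, by simp⟩
      simp only [Finset.mem_filter, Finset.mem_univ, true_and]
      rw [mul_smul, hg, ← hh, inv_smul_smul]
  rw [h1]
  have : IsPretransitive G X := ⟨htr⟩
  have h2 := sum_card_fixedBy_eq_card_orbits_mul_card_group G X
  have h3 : Fintype.card (Quotient (orbitRel G X)) = 1 := by
    rw [Fintype.card_eq_one_iff_nonempty_unique]
    obtain ⟨x⟩ := ‹Nonempty X›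
    refine ⟨⟨⟨⟦x⟧⟩, ?_⟩⟩
    intro y
    induction y using Quotient.inductionOn with
    | _ y => exact Quotient.sound (orbitRel_apply.2 (by
        rw [orbit_eq_univ]; trivial))
  rw [h3, one_mul] at h2
  rw [← h2]
  refine Finset.sum_congr rfl fun g _ => ?_
  rw [← Fintype.card_subtype]
  exact Fintype.card_congr (Equiv.refl _)

/-- Embeddings of `ι` which intertwine `r` with `x`. -/
noncomputable def zset {n : ℕ} {ι : Type} [Fintype ι] (r : Equiv.Perm ι) (x : Equiv.Perm (Fin n)) :
    Finset (ι ↪ Fin n) :=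
  Finset.univ.filter (fun a => ∀ j, x (a j) = a (r j))

lemma pretrans_congr {G α ι κ : Type*} [Group G] [MulAction G α] (e : ι ≃ κ)
    [h : MulAction.IsPretransitive G (ι ↪ α)] : MulAction.IsPretransitive G (κ ↪ α) := by
  constructor
  intro a b
  obtain ⟨g, hg⟩ := h.exists_smul_eq (e.toEmbedding.trans a) (e.toEmbedding.trans b)
  refine ⟨g, ?_⟩
  ext j
  have := DFunLike.congr_fun hg (e.symm j)
  simpa using this

lemma zsum_of_pretrans {n : ℕ} {ι : Type} [Fintype ι] (H : Subgroup (Equiv.Perm (Fin n)))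
    (htr : ∀ a b : ι ↪ Fin n, ∃ g : H, g • a = b) (hne : Nonempty (ι ↪ Fin n)) (r : Equiv.Perm ι) :
    ∑ g : H, (zset r (g : Equiv.Perm (Fin n))).card = Fintype.card H := by
  rw [← sum_transporters (G := H) (X := ι ↪ Fin n) htr (fun a => r.toEmbedding.trans a)]
  refine Finset.sum_congr rfl fun g _ => ?_
  congr 1
  ext a
  simp only [zset, Finset.mem_filter, Finset.mem_univ, true_and]
  rw [DFunLike.ext_iff]
  rfl

lemma zsum_top {n : ℕ} {ι : Type} [Fintype ι] (r : Equiv.Perm ι) :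
    ∑ g : Equiv.Perm (Fin n), (zset r g).card ≤ n.factorial := by
  by_cases hne : Nonempty (ι ↪ Fin n)
  · have h0 := Equiv.Perm.isMultiplyPretransitive (Fin n) (Fintype.card ι)
    have h1 : MulAction.IsPretransitive (Equiv.Perm (Fin n)) (ι ↪ Fin n) :=
      @pretrans_congr _ _ _ _ _ _ (Fintype.equivFin ι).symm h0
    have := sum_transporters (G := Equiv.Perm (Fin n)) (X := ι ↪ Fin n) h1.exists_smul_eq
      (fun a => r.toEmbedding.trans a)
    rw [Fintype.card_perm, Fintype.card_fin] at this
    rw [← this]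
    refine le_of_eq (Finset.sum_congr rfl fun g _ => ?_)
    congr 1
    ext a
    simp only [zset, Finset.mem_filter, Finset.mem_univ, true_and]
    rw [DFunLike.ext_iff]
    rfl
  · have : IsEmpty (ι ↪ Fin n) := not_nonempty_iff.1 hne
    simp [Finset.eq_empty_of_isEmpty]

lemma zsum_H {n : ℕ} (hn : 9 ≤ n)
    (H : Subgroup (Equiv.Perm (Fin n))) (hH : H = ⊤ ∨ H = alternatingGroup (Fin n))
    {ι : Type} [Fintype ι] (r : Equiv.Perm ι) (hι : Fintype.card ι + 2 ≤ n) :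
    ∑ g : H, (zset r (g : Equiv.Perm (Fin n))).card = Fintype.card H := by
  have hne : Nonempty (ι ↪ Fin n) := by
    apply Function.Embedding.nonempty_of_card_le
    simp; omega
  have hA : MulAction.IsPretransitive (alternatingGroup (Fin n)) (Fin (Fintype.card ι) ↪ Fin n) := by
    have := alternatingGroup.isMultiplyPretransitive (Fin n)
    apply MulAction.isMultiplyPretransitive_of_le (n := Nat.card (Fin n) - 2)
    · simp; omega
    · simp
  have hA' : MulAction.IsPretransitive (alternatingGroup (Fin n)) (ι ↪ Fin n) :=
    @pretrans_congr _ _ _ _ _ _ (Fintype.equivFin ι).symm hA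
  have : ∀ a b : ι ↪ Fin n, ∃ g : H, g • a = b := by
    intro a b
    obtain ⟨g, hg⟩ := hA'.exists_smul_eq a b
    refine ⟨⟨g, ?_⟩, hg⟩
    rcases hH with rfl | rfl
    · trivial
    · exact g.2
  exact zsum_of_pretrans H this hne r

lemma zsum_H_le {n : ℕ} (hn : 9 ≤ n)
    (H : Subgroup (Equiv.Perm (Fin n))) (hH : H = ⊤ ∨ H = alternatingGroup (Fin n))
    {ι : Type} [Fintype ι] (r : Equiv.Perm ι) :
    ∑ g : H, (zset r (g : Equiv.Perm (Fin n))).card ≤ 2 * Fintype.card H := by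
  have h1 : ∑ g : H, (zset r (g : Equiv.Perm (Fin n))).card
      ≤ ∑ g : Equiv.Perm (Fin n), (zset r g).card := by
    have := Finset.sum_map (Finset.univ : Finset H) (Function.Embedding.subtype (fun g => g ∈ H))
      (fun g : Equiv.Perm (Fin n) => (zset r g).card)
    refine this.symm.le.trans ?_
    exact Finset.sum_le_sum_of_subset (Finset.subset_univ _)
  refine h1.trans ((zsum_top r).trans ?_)
  have hnt : Nontrivial (Fin n) := Fin.nontrivial_iff_two_le.2 (by omega)
  rcases hH with rfl | rfl
  · have : Fintype.card (⊤ : Subgroup (Equiv.Perm (Fin n))) = n.factorial := by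
      rw [← Nat.card_eq_fintype_card, Subgroup.card_top, Nat.card_perm, Nat.card_fin]
    omega
  · have := two_mul_nat_card_alternatingGroup (α := Fin n)
    rw [Nat.card_perm, Nat.card_fin, Nat.card_eq_fintype_card] at this
    rw [← this]
    apply le_of_eq
    congr!

open Function in
lemma zset_iterate {n l : ℕ} (hl : 0 < l) {x : Equiv.Perm (Fin n)} {a : Fin l ↪ Fin n}
    (ha : a ∈ zset (finRotate l) x) (k : ℕ) :
    (x^[k]) (a ⟨0, hl⟩) = a ⟨k % l, Nat.mod_lt _ hl⟩ := by
  simp only [zset, Finset.mem_filter, Finset.mem_univ, true_and] at ha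
  induction k with
  | zero => simp
  | succ k ih =>
    rw [iterate_succ_apply', ih, ha]
    congr 1
    obtain ⟨m, rfl⟩ : ∃ m, l = m + 1 := ⟨l - 1, by omega⟩
    rw [finRotate_apply]
    ext
    simp [Fin.val_add]

open Function in
lemma zset_apply {n l : ℕ} (hl : 0 < l) {x : Equiv.Perm (Fin n)} {a : Fin l ↪ Fin n}
    (ha : a ∈ zset (finRotate l) x) (j : Fin l) :
    a j = (x^[(j : ℕ)]) (a ⟨0, hl⟩) := by
  rw [zset_iterate hl ha]
  congr 1
  ext
  simp [Nat.mod_eq_of_lt j.2]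

open Function in
lemma zset_minimalPeriod {n l : ℕ} (hl : 0 < l) {x : Equiv.Perm (Fin n)} {a : Fin l ↪ Fin n}
    (ha : a ∈ zset (finRotate l) x) (j : Fin l) :
    minimalPeriod x (a j) = l := by
  rw [zset_apply hl ha, minimalPeriod_apply_iterate (x.injective.mem_periodicPts _)]
  have key : ∀ k, IsPeriodicPt x k (a ⟨0, hl⟩) ↔ l ∣ k := by
    intro k
    unfold IsPeriodicPt IsFixedPt
    rw [zset_iterate hl ha, a.injective.eq_iff, Fin.mk.injEq, Nat.dvd_iff_mod_eq_zero]
  apply Nat.dvd_antisymm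
  · exact ((key l).2 dvd_rfl).minimalPeriod_dvd
  · exact (key _).1 (isPeriodicPt_minimalPeriod _ _)

open Function in
lemma exists_cyc {n : ℕ} (x : Equiv.Perm (Fin n)) (z : Fin n) {l : ℕ} (hl : 0 < l)
    (hz : minimalPeriod x z = l) :
    ∃ a ∈ zset (finRotate l) x, a ⟨0, hl⟩ = z := by
  refine ⟨⟨fun j => (x^[(j : ℕ)]) z, ?_⟩, ?_, ?_⟩
  · intro i j hij
    ext
    exact iterate_injOn_Iio_minimalPeriod (f := x) (x := z)
      (by simp [hz]) (by simp [hz]) hij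
  · simp only [zset, Finset.mem_filter, Finset.mem_univ, true_and]
    intro j
    change x ((x^[(j : ℕ)]) z) = (x^[((finRotate l j : Fin l) : ℕ)]) z
    rw [← iterate_succ_apply' x]
    obtain ⟨m, rfl⟩ : ∃ m, l = m + 1 := ⟨l - 1, by omega⟩
    rw [finRotate_apply, Fin.val_add]
    rw [← iterate_mod_minimalPeriod_eq (f := x) (n := (j : ℕ).succ), hz]
    simp
  · rfl

/-- `x` has exactly one cycle of length divisible by `b`, and that cycle has length `b`. -/
def good {n : ℕ} (b : ℕ) (x : Equiv.Perm (Fin n)) : Prop :=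
  ∃ a ∈ zset (finRotate b) x, ∀ z, b ∣ Function.minimalPeriod x z → z ∈ Set.range a

lemma dvd_helper {p e q j : ℕ} (hq : Odd q) (h : p ∣ 2 ^ e * q) (hj : ¬ 2 ^ (j + 1) ∣ p) :
    p ∣ 2 ^ j * q := by
  have hp : p ≠ 0 := by rintro rfl; exact hj (dvd_zero _)
  obtain ⟨f, m, hm, rfl⟩ := Nat.exists_eq_two_pow_mul_odd hp
  have hf : f ≤ j := by
    by_contra hc
    exact hj ((pow_dvd_pow 2 (by omega)).trans (dvd_mul_right _ _))
  have hm' : m ∣ q := by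
    have h1 : m ∣ 2 ^ e * q := (dvd_mul_left _ _).trans h
    exact (Nat.Coprime.dvd_mul_left (Nat.Coprime.pow_right _ (Nat.coprime_two_right.2 hm))).1 h1
  exact Nat.mul_dvd_mul (pow_dvd_pow 2 hf) hm'

open Function in
lemma good_imp {n k : ℕ} (hk : 1 ≤ k) {x : Equiv.Perm (Fin n)} (h : good (2 ^ k) x) :
    Even (orderOf x) ∧ (x ^ (orderOf x / 2)).support.card ≤ 2 ^ k := by
  obtain ⟨a, ha, hz⟩ := h
  have hb : 0 < 2 ^ k := by positivity
  have hpow : ∀ (m : ℕ) (z : Fin n), (x ^ m) z = z ↔ minimalPeriod x z ∣ m := by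
    intro m z
    rw [← isPeriodicPt_iff_minimalPeriod_dvd, ← Equiv.Perm.iterate_eq_pow]
    rfl
  have hdvd : ∀ z, minimalPeriod x z ∣ orderOf x := by
    intro z
    rw [← hpow, pow_orderOf_eq_one]
    rfl
  have hbo : 2 ^ k ∣ orderOf x := by
    rw [← zset_minimalPeriod hb ha ⟨0, hb⟩]
    exact hdvd _
  have hper : ∀ z, 2 ^ k ∣ minimalPeriod x z → minimalPeriod x z = 2 ^ k := by
    intro z h
    obtain ⟨j, rfl⟩ := hz z h
    exact zset_minimalPeriod hb ha j
  obtain ⟨e, q, hq, he⟩ := Nat.exists_eq_two_pow_mul_odd (orderOf_pos x).ne'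
  have hone : x ^ (2 ^ k * q) = 1 := by
    ext1 z
    rw [Equiv.Perm.one_apply, hpow]
    apply dvd_helper hq (he ▸ hdvd z)
    intro hc
    have h1 := hper z ((pow_dvd_pow 2 (Nat.le_succ k)).trans hc)
    rw [h1] at hc
    have := Nat.le_of_dvd hb hc
    rw [pow_succ] at this
    omega
  have hord : orderOf x = 2 ^ k * q := by
    apply Nat.dvd_antisymm (orderOf_dvd_of_pow_eq_one hone)
    apply Nat.Coprime.mul_dvd_of_dvd_of_dvd _ hbo
    · rw [he]; exact dvd_mul_left _ _
    · exact Nat.Coprime.pow_left _ (Nat.coprime_two_left.2 hq)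
  obtain ⟨j, rfl⟩ : ∃ j, k = j + 1 := ⟨k - 1, by omega⟩
  have hhalf : orderOf x / 2 = 2 ^ j * q := by
    rw [hord, pow_succ]
    rw [show 2 ^ j * 2 * q = 2 * (2 ^ j * q) by ring]
    simp
  refine ⟨?_, ?_⟩
  · rw [hord]
    exact ⟨2 ^ j * q, by ring⟩
  · have hsub : (x ^ (orderOf x / 2)).support ⊆ Finset.univ.map a := by
      intro z hzs
      rw [Equiv.Perm.mem_support] at hzs
      by_contra hc
      apply hzs
      rw [hpow, hhalf]
      apply dvd_helper hq (he ▸ hdvd z)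
      intro h1
      obtain ⟨i, hi⟩ := hz z h1
      exact hc (Finset.mem_map.2 ⟨i, Finset.mem_univ _, hi⟩)
    refine (Finset.card_le_card hsub).trans ?_
    simp

lemma good_card {n b : ℕ} (hb : 0 < b) {x : Equiv.Perm (Fin n)} (h : good b x) :
    (zset (finRotate b) x).card ≤ b := by
  obtain ⟨a, ha, hz⟩ := h
  have : (zset (finRotate b) x).card ≤ (Finset.univ.map a).card := by
    apply Finset.card_le_card_of_injOn (fun c => c ⟨0, hb⟩)
    · intro c hc
      obtain ⟨i, hi⟩ := hz (c ⟨0, hb⟩) (by rw [zset_minimalPeriod hb hc])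
      simp only [Finset.coe_map, Finset.coe_univ, Set.image_univ]
      exact ⟨i, hi⟩
    · intro c hc d hd hcd
      ext1 j
      rw [zset_apply hb hc, zset_apply hb hd]
      exact congrArg _ hcd
  simpa using this

/-- The pair rotation. -/
def rot2 (b l : ℕ) : Equiv.Perm (Fin b ⊕ Fin l) := Equiv.sumCongr (finRotate b) (finRotate l)

lemma mem_zset_inl {n b l : ℕ} {x : Equiv.Perm (Fin n)} {e : Fin b ⊕ Fin l ↪ Fin n}
    (he : e ∈ zset (rot2 b l) x) : Function.Embedding.inl.trans e ∈ zset (finRotate b) x := by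
  simp only [zset, Finset.mem_filter, Finset.mem_univ, true_and] at he ⊢
  intro j
  have := he (Sum.inl j)
  simpa [rot2] using this

open Function in
lemma fiber_card {n b : ℕ} (hb : 0 < b) {x : Equiv.Perm (Fin n)} (h : ¬ good b x)
    (a : Fin b ↪ Fin n) (ha : a ∈ zset (finRotate b) x) :
    ∃ i ∈ Finset.Icc 1 (n / b - 1), i * b ≤
      ((zset (rot2 b (i * b)) x).filter (fun e => Embedding.inl.trans e = a)).card := by
  have h' : ∃ z, b ∣ minimalPeriod x z ∧ z ∉ Set.range a := by
    by_contra hc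
    push Not at hc
    exact h ⟨a, ha, hc⟩
  obtain ⟨z, ⟨i, hi⟩, hza⟩ := h'
  rw [mul_comm] at hi
  have hpos : 0 < minimalPeriod x z := minimalPeriod_pos_of_mem_periodicPts
    (x.injective.mem_periodicPts z)
  have hl : 0 < i * b := hi ▸ hpos
  have hiter : ∀ k, (x^[k]) z ∉ Set.range a := by
    intro k
    induction k with
    | zero => exact hza
    | succ k ih =>
      rw [iterate_succ_apply']
      rintro ⟨j, hj⟩
      apply ih
      refine ⟨(finRotate b).symm j, x.injective ?_⟩
      simp only [zset, Finset.mem_filter, Finset.mem_univ, true_and] at ha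
      rw [ha, Equiv.apply_symm_apply]
      exact hj
  -- the embeddings
  have hex : ∀ k : Fin (i * b), ∃ e ∈ (zset (rot2 b (i * b)) x).filter
      (fun e => Embedding.inl.trans e = a), e (Sum.inr ⟨0, hl⟩) = (x^[(k : ℕ)]) z := by
    intro k
    have hp : minimalPeriod x ((x^[(k : ℕ)]) z) = i * b := by
      rw [minimalPeriod_apply_iterate (x.injective.mem_periodicPts _), hi]
    obtain ⟨c, hc, hc0⟩ := exists_cyc x ((x^[(k : ℕ)]) z) hl hp
    have hdis : ∀ j, c j ∉ Set.range a := by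
      intro j
      rw [zset_apply hl hc, hc0, ← iterate_add_apply]
      exact hiter _
    refine ⟨⟨Sum.elim a c, ?_⟩, ?_, ?_⟩
    · apply Function.Injective.sumElim a.injective c.injective
      intro s t hst
      exact hdis t ⟨s, hst⟩
    · rw [Finset.mem_filter]
      constructor
      · simp only [zset, Finset.mem_filter, Finset.mem_univ, true_and] at ha hc ⊢
        rintro (j | j)
        · simpa [rot2] using ha j
        · simpa [rot2] using hc j
      · ext1 j
        simp
    · simpa using hc0
  choose e he he0 using hex
  refine ⟨i, ?_, ?_⟩
  · rw [Finset.mem_Icc]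
    constructor
    · by_contra hc
      have : i = 0 := by omega
      simp [this] at hl
    · have h1 := Fintype.card_le_of_embedding (e ⟨0, hl⟩)
      simp only [Fintype.card_sum, Fintype.card_fin] at h1
      have : (i + 1) ≤ n / b := by
        rw [Nat.le_div_iff_mul_le hb]
        linarith
      omega
  · calc i * b = (Finset.univ : Finset (Fin (i * b))).card := by simp
      _ ≤ _ := by
        apply Finset.card_le_card_of_injOn e
        · intro k _
          exact he k
        · intro k _ k' _ hkk
          have h1 : (x^[(k : ℕ)]) z = (x^[(k' : ℕ)]) z := by rw [← he0, ← he0, hkk]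
          ext
          exact iterate_injOn_Iio_minimalPeriod (f := x) (x := z)
            (by simp [hi]) (by simp [hi]) h1

lemma pointwise {n b : ℕ} (hb : 0 < b) (x : Equiv.Perm (Fin n)) :
    ((zset (finRotate b) x).card : ℝ) ≤ b * (if good b x then 1 else 0) +
      ∑ i ∈ Finset.Icc 1 (n / b - 1), (1 / ((i : ℝ) * b)) * (zset (rot2 b (i * b)) x).card := by
  have hnn : ∀ i : ℕ, 0 ≤ (1 / ((i : ℝ) * b)) * ((zset (rot2 b (i * b)) x).card : ℝ) := by
    intro i; positivity
  split_ifs with h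
  · have h1 : ((zset (finRotate b) x).card : ℝ) ≤ b := by exact_mod_cast good_card hb h
    have := Finset.sum_nonneg (s := Finset.Icc 1 (n / b - 1)) (fun i _ => hnn i)
    linarith
  · rw [mul_zero, zero_add]
    have hf : ∀ i : ℕ, ((zset (rot2 b (i * b)) x).card : ℝ) = ∑ a ∈ zset (finRotate b) x,
        (((zset (rot2 b (i * b)) x).filter
          (fun e => Function.Embedding.inl.trans e = a)).card : ℝ) := by
      intro i
      rw [← Nat.cast_sum]
      congr 1
      exact Finset.card_eq_sum_card_fiberwise (fun e he => mem_zset_inl he)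
    simp_rw [hf, Finset.mul_sum]
    rw [Finset.sum_comm, Finset.card_eq_sum_ones, Nat.cast_sum]
    apply Finset.sum_le_sum
    intro a ha
    obtain ⟨i, hi, hc⟩ := fiber_card hb h a ha
    have hi1 : 1 ≤ i := (Finset.mem_Icc.1 hi).1
    refine le_trans ?_ (Finset.single_le_sum (f := fun i : ℕ => (1 / ((i : ℝ) * b)) *
      (((zset (rot2 b (i * b)) x).filter
          (fun e => Function.Embedding.inl.trans e = a)).card : ℝ)) (fun i _ => by positivity) hi)
    have hc' : (i : ℝ) * b ≤ (((zset (rot2 b (i * b)) x).filter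
          (fun e => Function.Embedding.inl.trans e = a)).card : ℝ) := by exact_mod_cast hc
    have hp : (0 : ℝ) < (i : ℝ) * b := by positivity
    simp only [Nat.cast_one]
    rw [one_div, inv_mul_eq_div, le_div_iff₀ hp]
    linarith

lemma good_count {n b : ℕ} (hn : 9 ≤ n) (hb : 2 ≤ b) (hbn : b + 2 ≤ n)
    (H : Subgroup (Equiv.Perm (Fin n))) (hH : H = ⊤ ∨ H = alternatingGroup (Fin n)) :
    (Fintype.card H : ℝ) * (1 - ((harmonic (n / b - 1) : ℚ) + 1) / b) / b ≤
      ((Finset.univ.filter (fun g : H => good b (g : Equiv.Perm (Fin n)))).card : ℝ) := by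
  have hb0 : (0 : ℝ) < b := by positivity
  have hsum := Finset.sum_le_sum (s := (Finset.univ : Finset H))
    (fun g _ => pointwise (b := b) (by omega) (g : Equiv.Perm (Fin n)))
  rw [← Nat.cast_sum, zsum_H hn H hH _ (by simpa using hbn), Finset.sum_add_distrib,
    ← Finset.mul_sum, Finset.sum_comm] at hsum
  simp_rw [← Finset.mul_sum, ← Nat.cast_sum] at hsum
  rw [Finset.sum_boole] at hsum
  set N : ℝ := (Fintype.card H : ℝ) with hN
  have hN0 : 0 ≤ N := by positivity
  have hbound : ∑ i ∈ Finset.Icc 1 (n / b - 1), (1 / ((i : ℝ) * b)) *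
      ((∑ g : H, (zset (rot2 b (i * b)) (g : Equiv.Perm (Fin n))).card : ℕ) : ℝ)
      ≤ ∑ i ∈ Finset.Icc 1 (n / b - 1), (((i : ℝ))⁻¹ * (N / b) +
        if i = n / b - 1 then N / b else 0) := by
    apply Finset.sum_le_sum
    intro i hi
    rw [Finset.mem_Icc] at hi
    have hi0 : (1 : ℝ) ≤ i := by exact_mod_cast hi.1
    have hinv : (i : ℝ)⁻¹ ≤ 1 := inv_le_one_of_one_le₀ hi0
    have hinv0 : 0 ≤ (i : ℝ)⁻¹ := by positivity
    have hNb : 0 ≤ N / b := by positivity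
    split_ifs with hc
    · have h2 : ((∑ g : H, (zset (rot2 b (i * b)) (g : Equiv.Perm (Fin n))).card : ℕ) : ℝ)
          ≤ 2 * N := by
        rw [hN]
        exact_mod_cast zsum_H_le hn H hH (rot2 b (i * b))
      calc _ ≤ (1 / ((i : ℝ) * b)) * (2 * N) := by gcongr
        _ = (i : ℝ)⁻¹ * (N / b) + (i : ℝ)⁻¹ * (N / b) := by field_simp; ring
        _ ≤ _ := by nlinarith
    · have hle : (i + 2) ≤ n / b := by omega
      rw [Nat.le_div_iff_mul_le (by omega)] at hle
      rw [zsum_H hn H hH (rot2 b (i * b)) (by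
        simp only [Fintype.card_sum, Fintype.card_fin]; nlinarith)]
      apply le_of_eq
      field_simp
      ring
  have hfin : ∑ i ∈ Finset.Icc 1 (n / b - 1), (((i : ℝ))⁻¹ * (N / b) +
        if i = n / b - 1 then N / b else 0) ≤ ((harmonic (n / b - 1) : ℚ) + 1) * (N / b) := by
    rw [Finset.sum_add_distrib, ← Finset.sum_mul, harmonic_eq_sum_Icc, add_mul]
    push_cast
    gcongr
    rw [one_mul, Finset.sum_ite_eq']
    split_ifs
    · rfl
    · positivity
  rw [div_le_iff₀ hb0]
  have h3 : N ≤ b * ((Finset.univ.filter (fun g : H => good b (g : Equiv.Perm (Fin n)))).card : ℝ)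
      + ((harmonic (n / b - 1) : ℚ) + 1) * (N / b) := by linarith
  have h4 : N * (1 - ((harmonic (n / b - 1) : ℚ) + 1) / b) =
      N - ((harmonic (n / b - 1) : ℚ) + 1) * (N / b) := by ring
  rw [h4]
  linarith

lemma harmonic_mono' {m k : ℕ} (h : m ≤ k) : harmonic m ≤ harmonic k := by
  unfold harmonic
  apply Finset.sum_le_sum_of_subset_of_nonneg
  · exact Finset.range_subset_range.2 h
  · intro i _ _; positivity

lemma harmonic_four : harmonic 4 = 25 / 12 := by
  norm_num [harmonic, Finset.sum_range_succ]

lemma harmonic_seven : harmonic 7 = 363 / 140 := by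
  norm_num [harmonic, Finset.sum_range_succ]

lemma harmonic_bound : harmonic 39 ≤ 43 / 10 := by
  norm_num [harmonic, Finset.sum_range_succ]

lemma numeric_of {n b : ℕ} (hb : 0 < b) {h L : ℝ} (hL : 0 < L)
    (hh : ((harmonic (n / b - 1) : ℚ) : ℝ) ≤ h) (hLn : L ≤ Real.log n)
    (hc : (b : ℝ) ≤ 13 * L * (1 - (h + 1) / b)) :
    1 / (13 * Real.log n) ≤ (1 - (((harmonic (n / b - 1) : ℚ) : ℝ) + 1) / b) / b := by
  have hb0 : (0 : ℝ) < b := by exact_mod_cast hb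
  have h1 : 1 / (13 * Real.log n) ≤ 1 / (13 * L) := by gcongr
  refine h1.trans ?_
  rw [div_le_div_iff₀ (by positivity) hb0]
  have h2 : (1 - (h + 1) / b) ≤ (1 - (((harmonic (n / b - 1) : ℚ) : ℝ) + 1) / b) := by gcongr
  have h3 := mul_le_mul_of_nonneg_left h2 (show 0 ≤ 13 * L by positivity)
  linarith

lemma numeric {n : ℕ} (hn : 9 ≤ n) : ∃ k : ℕ, 1 ≤ k ∧ 2 ^ k + 2 ≤ n ∧
    ((2 ^ k : ℕ) : ℝ) ≤ 4 * Real.sqrt n / 3 ∧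
    1 / (13 * Real.log n) ≤
      (1 - (((harmonic (n / 2 ^ k - 1) : ℚ) : ℝ) + 1) / ((2 ^ k : ℕ) : ℝ)) / ((2 ^ k : ℕ) : ℝ) := by
  have hn9 : (9 : ℝ) ≤ n := by exact_mod_cast hn
  have hn0 : (0 : ℝ) < n := by linarith
  have he : Real.exp 1 < 2.7182818286 := Real.exp_one_lt_d9
  have he' : 2.7182818283 < Real.exp 1 := Real.exp_one_gt_d9
  have hlog2 : (2 : ℝ) ≤ Real.log n := by
    rw [Real.le_log_iff_exp_le hn0]
    have : Real.exp 2 = Real.exp 1 ^ 2 := by rw [← Real.exp_nat_mul]; norm_num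
    rw [this]
    have : Real.exp 1 ^ 2 ≤ 2.7182818286 ^ 2 := by gcongr
    norm_num at this
    linarith
  rcases lt_or_ge n 36 with h36 | h36
  · have hs : (3 : ℝ) ≤ Real.sqrt n := Real.le_sqrt_of_sq_le (by linarith)
    refine ⟨2, by norm_num, by omega, by norm_num; linarith, ?_⟩
    rcases lt_or_ge n 24 with h24 | h24
    · apply numeric_of (h := 25 / 12) (L := 2) (by norm_num) (by norm_num) _ hlog2 (by norm_num)
      have := harmonic_mono' (m := n / 2 ^ 2 - 1) (k := 4) (by omega)
      rw [harmonic_four] at this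
      have h9 := (Rat.cast_le (K := ℝ)).2 this
      push_cast at h9
      exact h9
    · have h24' : (24 : ℝ) ≤ n := by exact_mod_cast h24
      apply numeric_of (h := 363 / 140) (L := 3.1) (by norm_num) (by norm_num) _ _ (by norm_num)
      · have := harmonic_mono' (m := n / 2 ^ 2 - 1) (k := 7) (by omega)
        rw [harmonic_seven] at this
        have h9 := (Rat.cast_le (K := ℝ)).2 this
        push_cast at h9
        exact h9
      · have h1 : (31 : ℝ) ≤ Real.log ((24 : ℝ) ^ 10) := by
          rw [Real.le_log_iff_exp_le (by positivity)]
          have : Real.exp 31 = Real.exp 1 ^ 31 := by rw [← Real.exp_nat_mul]; norm_num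
          rw [this]
          have : Real.exp 1 ^ 31 ≤ 2.7182818286 ^ 31 := by gcongr
          refine this.trans ?_
          norm_num
        rw [Real.log_pow] at h1
        have h2 : Real.log 24 ≤ Real.log n := Real.log_le_log (by norm_num) h24'
        push_cast at h1
        linarith
  rcases lt_or_ge n 324 with h324 | h324
  · have h36' : (36 : ℝ) ≤ n := by exact_mod_cast h36
    have hs : (6 : ℝ) ≤ Real.sqrt n := Real.le_sqrt_of_sq_le (by linarith)
    refine ⟨3, by norm_num, by omega, by norm_num; linarith, ?_⟩
    apply numeric_of (h := 43 / 10) (L := 2) (by norm_num) (by norm_num) _ hlog2 (by norm_num)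
    have := (harmonic_mono' (m := n / 2 ^ 3 - 1) (k := 39) (by omega)).trans harmonic_bound
    have h9 := (Rat.cast_le (K := ℝ)).2 this
    push_cast at h9
    exact h9
  · have h324' : (324 : ℝ) ≤ n := by exact_mod_cast h324
    have hs : (18 : ℝ) ≤ Real.sqrt n := Real.le_sqrt_of_sq_le (by linarith)
    have hlog : (11 : ℝ) / 2 ≤ Real.log n := by
      have h1 : (11 : ℝ) ≤ Real.log ((324 : ℝ) ^ 2) := by
        rw [Real.le_log_iff_exp_le (by positivity)]
        have : Real.exp 11 = Real.exp 1 ^ 11 := by rw [← Real.exp_nat_mul]; norm_num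
        rw [this]
        have : Real.exp 1 ^ 11 ≤ 2.7182818286 ^ 11 := by gcongr
        refine this.trans ?_
        norm_num
      rw [Real.log_pow] at h1
      have h2 : Real.log 324 ≤ Real.log n := Real.log_le_log (by norm_num) h324'
      push_cast at h1
      linarith
    have hupper : Real.log n ≤ Real.sqrt n / 3 := by
      have he2 : Real.exp 2 ≤ 324 := by
        have : Real.exp 2 = Real.exp 1 ^ 2 := by rw [← Real.exp_nat_mul]; norm_num
        rw [this]
        have : Real.exp 1 ^ 2 ≤ 2.7182818286 ^ 2 := by gcongr
        norm_num at this
        linarith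
      have h1 := Real.log_div_sqrt_antitoneOn (a := (324 : ℝ)) (b := (n : ℝ))
        he2 (he2.trans h324') h324'
      have h18 : Real.sqrt 324 = 18 := by
        rw [show (324 : ℝ) = 18 ^ 2 by norm_num]
        exact Real.sqrt_sq (by norm_num)
      have hl : Real.log 324 ≤ 6 := by
        rw [Real.log_le_iff_le_exp (by norm_num)]
        have : Real.exp 6 = Real.exp 1 ^ 6 := by rw [← Real.exp_nat_mul]; norm_num
        rw [this]
        have : (2.7182818283 : ℝ) ^ 6 ≤ Real.exp 1 ^ 6 := by gcongr
        refine le_trans ?_ this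
        norm_num
      simp only [h18] at h1
      rw [div_le_iff₀ (by linarith)] at h1
      have h3 : Real.log 324 / 18 ≤ 1 / 3 := by linarith
      nlinarith
    obtain ⟨m, hm1, hm2⟩ := exists_nat_pow_near (x := 2 * Real.log n) (y := 2)
      (by linarith) (by norm_num)
    have hb4 : (2 : ℝ) ^ (m + 1) ≤ 4 * Real.log n := by rw [pow_succ]; linarith
    have hb11 : (11 : ℝ) < (2 : ℝ) ^ (m + 1) := by linarith
    have hbs : (2 : ℝ) ^ (m + 1) ≤ 4 * Real.sqrt n / 3 := by linarith
    have hsq : Real.sqrt n * Real.sqrt n = n := Real.mul_self_sqrt hn0.le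
    refine ⟨m + 1, by omega, ?_, ?_, ?_⟩
    · have : ((2 ^ (m + 1) + 2 : ℕ) : ℝ) ≤ n := by
        push_cast
        nlinarith
      exact_mod_cast this
    · push_cast; exact hbs
    · apply numeric_of (h := Real.log n - 1) (L := Real.log n) (by positivity) (by linarith) _ le_rfl
      · push_cast
        have h1 : (Real.log n - 1 + 1) / (2 : ℝ) ^ (m + 1) ≤ 1 / 2 := by
          rw [div_le_iff₀ (by positivity)]
          linarith
        nlinarith
      · refine (harmonic_le_one_add_log _).trans ?_
        have hlb : (2 : ℝ) ≤ Real.log ((2 : ℝ) ^ (m + 1)) := by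
          rw [Real.le_log_iff_exp_le (by positivity)]
          have : Real.exp 2 = Real.exp 1 ^ 2 := by rw [← Real.exp_nat_mul]; norm_num
          rw [this]
          have : Real.exp 1 ^ 2 ≤ 2.7182818286 ^ 2 := by gcongr
          norm_num at this
          linarith
        have hld : Real.log ((n / 2 ^ (m + 1) - 1 : ℕ) : ℝ) ≤ Real.log (n / (2 : ℝ) ^ (m + 1)) := by
          have hle1 : (1 : ℝ) ≤ n / (2 : ℝ) ^ (m + 1) := by
            rw [le_div_iff₀ (by positivity)]
            nlinarith
          rcases Nat.eq_zero_or_pos (n / 2 ^ (m + 1) - 1) with h0 | h0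
          · rw [h0, Nat.cast_zero, Real.log_zero]
            exact Real.log_nonneg hle1
          · apply Real.log_le_log (by exact_mod_cast h0)
            have h5 : ((n / 2 ^ (m + 1) - 1 : ℕ) : ℝ) ≤ ((n / 2 ^ (m + 1) : ℕ) : ℝ) := by
              exact_mod_cast Nat.sub_le _ _
            refine h5.trans ?_
            have := Nat.cast_div_le (α := ℝ) (m := n) (n := 2 ^ (m + 1))
            push_cast at this
            exact this
        rw [Real.log_div (by positivity) (by positivity)] at hld
        linarith


lemma tuples_prob {α : Type*} [Fintype α] [Nonempty α] (P : α → Prop) (T : ℕ) (p ε : ℝ)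
    (hp : (Fintype.card α : ℝ) * p ≤ ((Finset.univ.filter P).card : ℝ))
    (hε : 0 < ε) (hT : Real.log ε⁻¹ ≤ p * T) :
    1 - ε ≤ ((Finset.univ.filter (fun f : Fin T → α => ∃ i, P (f i))).card : ℝ) /
      (Fintype.card (Fin T → α) : ℝ) := by
  have hN : (0 : ℝ) < Fintype.card α := by exact_mod_cast Fintype.card_pos
  have hNT : (0 : ℝ) < (Fintype.card α : ℝ) ^ T := by positivity
  have hcard : (Fintype.card (Fin T → α) : ℝ) = (Fintype.card α : ℝ) ^ T := by simp
  have hsplit := Finset.card_filter_add_card_filter_not (s := (Finset.univ : Finset (Fin T → α)))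
    (fun f => ∃ i, P (f i))
  have hbad : (Finset.univ.filter (fun f : Fin T → α => ¬ ∃ i, P (f i))) =
      Fintype.piFinset (fun _ : Fin T => Finset.univ.filter (fun a => ¬ P a)) := by
    ext f
    simp [Fintype.mem_piFinset]
  rw [hbad, Fintype.card_piFinset_const] at hsplit
  have hsplit1 := Finset.card_filter_add_card_filter_not (s := (Finset.univ : Finset α)) P
  rw [Finset.card_univ] at hsplit hsplit1
  have hs : ((Finset.univ.filter (fun f : Fin T → α => ∃ i, P (f i))).card : ℝ) +
      ((Finset.univ.filter (fun a => ¬ P a)).card : ℝ) ^ T = (Fintype.card α : ℝ) ^ T := by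
    rw [← hcard]
    exact_mod_cast hsplit
  have hs1 : ((Finset.univ.filter P).card : ℝ) +
      ((Finset.univ.filter (fun a => ¬ P a)).card : ℝ) = (Fintype.card α : ℝ) := by
    exact_mod_cast hsplit1
  rw [hcard, le_div_iff₀ hNT]
  have hB : ((Finset.univ.filter (fun a => ¬ P a)).card : ℝ) ≤ Fintype.card α * Real.exp (-p) := by
    have := Real.add_one_le_exp (-p)
    nlinarith
  have hBT : ((Finset.univ.filter (fun a => ¬ P a)).card : ℝ) ^ T ≤
      (Fintype.card α : ℝ) ^ T * ε := by
    calc _ ≤ (Fintype.card α * Real.exp (-p)) ^ T := by gcongr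
      _ = (Fintype.card α : ℝ) ^ T * Real.exp (T * (-p)) := by
        rw [mul_pow, Real.exp_nat_mul]
      _ ≤ _ := by
        gcongr
        rw [← Real.le_log_iff_exp_le hε]
        rw [Real.log_inv] at hT
        linarith
  linarith

/-- Let `n ≥ 9`, `G ∈ {Alt_n, Sym_n}`, `0 < ε < 1` and
`T = ⌈13·log n·log ε⁻¹⌉`.  Among all `T`-tuples of elements of `G` (each tuple equally
likely, which models `T` independent uniform random elements), the proportion of tuples
containing an element `x` of even order with `x^(|x|/2)` moving at most `⌊4√n/3⌋` points
is at least `1 − ε`. -/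
theorem smallSupportInvolution_found_with_high_probability (n : ℕ) (hn : 9 ≤ n)
    (H : Subgroup (Equiv.Perm (Fin n))) (hH : H = ⊤ ∨ H = alternatingGroup (Fin n))
    (ε : ℝ) (hε0 : 0 < ε) (hε1 : ε < 1)
    (T : ℕ) (hT : T = ⌈13 * Real.log n * Real.log ε⁻¹⌉₊) :
    1 - ε ≤
      ((Finset.univ.filter (fun f : Fin T → H => ∃ i : Fin T,
          Even (orderOf ((f i : Equiv.Perm (Fin n)))) ∧
          ((((f i : Equiv.Perm (Fin n)) ^
              (orderOf ((f i : Equiv.Perm (Fin n))) / 2)).support.card : ℝ)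
            ≤ ((⌊4 * Real.sqrt n / 3⌋ : ℤ) : ℝ)))).card : ℝ) /
        (Fintype.card (Fin T → H) : ℝ) := by
  obtain ⟨k, hk, hkn, hks, hnum⟩ := numeric hn
  have hlog : 0 < Real.log n := Real.log_pos (by exact_mod_cast (by omega : 1 < n))
  have key := tuples_prob (α := H) (fun g : H => Even (orderOf ((g : Equiv.Perm (Fin n)))) ∧
          ((((g : Equiv.Perm (Fin n)) ^
              (orderOf ((g : Equiv.Perm (Fin n))) / 2)).support.card : ℝ)
            ≤ ((⌊4 * Real.sqrt n / 3⌋ : ℤ) : ℝ))) T (1 / (13 * Real.log n)) ε ?_ hε0 ?_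
  · convert key
  · have hgc := good_count hn (b := 2 ^ k) (by
      calc 2 = 2 ^ 1 := by norm_num
        _ ≤ 2 ^ k := Nat.pow_le_pow_right (by norm_num) hk) hkn H hH
    rw [mul_div_assoc] at hgc
    refine (mul_le_mul_of_nonneg_left hnum (by positivity)).trans (hgc.trans ?_)
    rw [Nat.cast_le]
    apply Finset.card_le_card
    intro g hg
    rw [Finset.mem_filter] at hg
    obtain ⟨h1, h2⟩ := good_imp hk hg.2
    refine (@Finset.mem_filter _ _ (_) _ _).2 ⟨Finset.mem_univ _, h1, ?_⟩
    have h3 : ((2 ^ k : ℕ) : ℤ) ≤ ⌊4 * Real.sqrt n / 3⌋ := by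
      rw [Int.le_floor]
      exact_mod_cast hks
    have h4 : (((g : Equiv.Perm (Fin n)) ^
        (orderOf (g : Equiv.Perm (Fin n)) / 2)).support.card : ℤ) ≤ ⌊4 * Real.sqrt n / 3⌋ :=
      le_trans (by exact_mod_cast h2) h3
    exact_mod_cast h4
  · have := Nat.le_ceil (13 * Real.log n * Real.log ε⁻¹)
    rw [← hT] at this
    rw [one_div, inv_mul_eq_div, le_div_iff₀ (by positivity)]
    linarith
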